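/- Fix T > 0 with nT ≥ 1, σ > 0, and let A ∈ ℝ^{m×n} be the heat measurement matrix. For a source vector f ∈ [0,1]^n with ‖f‖₁ = 1, let P_f denote the Gaussian distribution N(Af, σ² I_m) on ℝ^m. Then there is a universal constant C > 0 such that for all source vectors f_0, f_0' with ‖f_0‖₁ = ‖f_0'‖₁ = 1, the Kullback–Leibler divergence satisfies D(P_{f_0} ‖ P_{f_0'}) = ‖A f_0 − A f_0'‖₂² / (2σ²) ≤ C (m / (T³ σ²)) · EMD(f_0, f_0')². -/

import Mathlib

open scoped BigOperators
open MeasureTheory ProbabilityTheory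

/-- The Euclidean (`ℓ₂`) norm of a vector in `ℝ^m`. -/
noncomputable def l2norm {m : ℕ} (x : Fin m → ℝ) : ℝ := Real.sqrt (∑ i, (x i) ^ 2)

/-- The `ℓ₁` norm of a vector in `ℝ^n`. -/
noncomputable def l1norm {n : ℕ} (x : Fin n → ℝ) : ℝ := ∑ i, |x i|

/-- The Earth Mover Distance between two mass distributions `p q` on a finite
space with distance function `d`. -/
noncomputable def EMD {n : ℕ} (d : Fin n → Fin n → ℝ) (p q : Fin n → ℝ) : ℝ :=
  sInf {c : ℝ | ∃ F : Fin n → Fin n → ℝ,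
    (∀ i j, 0 ≤ F i j) ∧ (∀ i, ∑ j, F i j ≤ p i) ∧ (∀ j, ∑ i, F i j ≤ q j) ∧
    (∑ i, ∑ j, F i j = 1) ∧ c = ∑ i, ∑ j, F i j * d i j}

/-- The metric on the grid `{1/n, …, 1}`, indexed by `Fin n`: `d(i/n, j/n) = |i−j|/n`. -/
noncomputable def gridDist (n : ℕ) (i j : Fin n) : ℝ := |(i : ℝ) - (j : ℝ)| / n

/-- The one-dimensional heat kernel `g(x) = (1/√(4πT)) e^(−x²/(4T))` at diffusion time `T`. -/
noncomputable def heatKernel (T x : ℝ) : ℝ :=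
  (1 / Real.sqrt (4 * Real.pi * T)) * Real.exp (-x ^ 2 / (4 * T))

/-- The heat measurement matrix `A ∈ ℝ^{m×n}` with `A_{ij} = g(j/n − i/m)`. -/
noncomputable def heatMatrix (T : ℝ) (m n : ℕ) : Matrix (Fin m) (Fin n) ℝ :=
  Matrix.of fun i j => heatKernel T (((j : ℝ) + 1) / n - ((i : ℝ) + 1) / m)

/-- The Gaussian distribution `N(Af, σ² I_m)` on `ℝ^m` induced by the source vector `f`. -/
noncomputable def measDist (T σ : ℝ) (m n : ℕ) (f : Fin n → ℝ) : Measure (Fin m → ℝ) :=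
  Measure.pi fun i => gaussianReal ((heatMatrix T m n).mulVec f i) ⟨σ ^ 2, sq_nonneg σ⟩

/-- The Kullback–Leibler divergence `D(p‖q) = ∫ log (dp/dq) dp`. -/
noncomputable def KLdiv {m : ℕ} (p q : Measure (Fin m → ℝ)) : ℝ :=
  ∫ x, Real.log (p.rnDeriv q x).toReal ∂p

open scoped ENNReal NNReal in
lemma aux_pi_withDensity {m : ℕ} (p q : Fin m → Measure ℝ) [∀ i, IsProbabilityMeasure (p i)]
    [∀ i, IsProbabilityMeasure (q i)] (h : Fin m → ℝ → ℝ≥0∞) (hm : ∀ i, Measurable (h i))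
    (hp : ∀ i, p i = (q i).withDensity (h i)) :
    Measure.pi p = (Measure.pi q).withDensity (fun x => ∏ i, h i (x i)) := by
  apply Measure.pi_eq
  intro s hs
  rw [withDensity_apply _ (MeasurableSet.univ_pi hs), ← lintegral_indicator (MeasurableSet.univ_pi hs)]
  have h1 : (Set.univ.pi s).indicator (fun x : Fin m → ℝ => ∏ i, h i (x i)) =
      fun x => ∏ i, (s i).indicator (h i) (x i) := by
    funext x
    by_cases hx : x ∈ Set.univ.pi s
    · rw [Set.indicator_of_mem hx]
      refine Finset.prod_congr rfl fun i _ => ?_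
      rw [Set.indicator_of_mem (hx i (Set.mem_univ i))]
    · rw [Set.indicator_of_notMem hx]
      simp only [Set.mem_pi, Set.mem_univ, true_imp_iff, not_forall] at hx
      obtain ⟨i, hi⟩ := hx
      exact (Finset.prod_eq_zero (Finset.mem_univ i) (Set.indicator_of_notMem hi _)).symm
  rw [h1]
  have hmi : ∀ i, Measurable ((s i).indicator (h i)) := fun i => (hm i).indicator (hs i)
  have hind : iIndepFun (fun i (x : Fin m → ℝ) => (s i).indicator (h i) (x i)) (Measure.pi q) :=
    iIndepFun_pi (X := fun i => (s i).indicator (h i)) fun i => (hmi i).aemeasurable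
  rw [lintegral_prod_eq_prod_lintegral_of_indepFun Finset.univ
    (fun i (x : Fin m → ℝ) => (s i).indicator (h i) (x i)) hind
    (fun i => (hmi i).comp (measurable_pi_apply i))]
  refine Finset.prod_congr rfl fun i _ => ?_
  rw [(measurePreserving_eval q i).lintegral_comp (hmi i), lintegral_indicator (hs i), hp i,
    withDensity_apply _ (hs i)]

open scoped NNReal in
lemma aux_gauss_withDensity (a b : ℝ) (v : ℝ≥0) (hv : v ≠ 0) :
    gaussianReal a v = (gaussianReal b v).withDensity
      (fun x => ENNReal.ofReal (Real.exp ((2 * (a - b) * x + (b ^ 2 - a ^ 2)) / (2 * v)))) := by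
  rw [gaussianReal_of_var_ne_zero _ hv, gaussianReal_of_var_ne_zero _ hv,
    ← withDensity_mul _ (measurable_gaussianPDF b v) (by fun_prop)]
  congr 1
  funext x
  simp only [Pi.mul_apply, gaussianPDF]
  rw [← ENNReal.ofReal_mul (gaussianPDFReal_nonneg _ _ _)]
  congr 1
  simp only [gaussianPDFReal]
  rw [mul_assoc (√(2 * Real.pi * v))⁻¹, ← Real.exp_add]
  congr 2
  ring

open scoped NNReal in
lemma aux_kl {m : ℕ} (a b : Fin m → ℝ) (v : ℝ≥0) (hv : v ≠ 0) :
    KLdiv (Measure.pi fun i => gaussianReal (a i) v) (Measure.pi fun i => gaussianReal (b i) v) =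
      (∑ i, (a i - b i) ^ 2) / (2 * v) := by
  have hv' : (v : ℝ) ≠ 0 := by exact_mod_cast hv
  have key := aux_pi_withDensity (fun i => gaussianReal (a i) v) (fun i => gaussianReal (b i) v)
    (fun i x => ENNReal.ofReal
      (Real.exp ((2 * (a i - b i) * x + (b i ^ 2 - a i ^ 2)) / (2 * v))))
    (fun i => by fun_prop) (fun i => aux_gauss_withDensity (a i) (b i) v hv)
  have hae := Measure.rnDeriv_withDensity (Measure.pi fun i => gaussianReal (b i) v)
    (f := fun x => ∏ i, ENNReal.ofReal
      (Real.exp ((2 * (a i - b i) * x i + (b i ^ 2 - a i ^ 2)) / (2 * v)))) (by fun_prop)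
  have hac : (Measure.pi fun i => gaussianReal (a i) v) ≪
      (Measure.pi fun i => gaussianReal (b i) v) := by
    rw [key]; exact withDensity_absolutelyContinuous _ _
  rw [← key] at hae
  have hae' := hac.ae_le hae
  have hint : ∀ i, Integrable
      (fun x : ℝ => (2 * (a i - b i) * x + (b i ^ 2 - a i ^ 2)) / (2 * (v : ℝ)))
      (gaussianReal (a i) v) := fun i => by
    have : Integrable (fun x : ℝ => x) (gaussianReal (a i) v) :=
      (memLp_id_gaussianReal 1).integrable (by simp)
    exact ((this.const_mul _).add (integrable_const _)).div_const _
  unfold KLdiv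
  rw [integral_congr_ae (g := fun x : Fin m → ℝ =>
    ∑ i, (2 * (a i - b i) * x i + (b i ^ 2 - a i ^ 2)) / (2 * (v : ℝ)))]
  · rw [integral_finsetSum _ fun i _ => integrable_comp_eval
      (μ := fun i => gaussianReal (a i) v) (i := i)
      (f := fun x : ℝ => (2 * (a i - b i) * x + (b i ^ 2 - a i ^ 2)) / (2 * (v : ℝ)))
      (hint i), Finset.sum_div]
    refine Finset.sum_congr rfl fun i _ => ?_
    rw [integral_comp_eval (μ := fun i => gaussianReal (a i) v) (i := i)
      (f := fun x : ℝ => (2 * (a i - b i) * x + (b i ^ 2 - a i ^ 2)) / (2 * (v : ℝ)))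
      (hint i).aestronglyMeasurable]
    have hx : Integrable (fun x : ℝ => x) (gaussianReal (a i) v) :=
      (memLp_id_gaussianReal 1).integrable (by simp)
    rw [integral_div, integral_add (hx.const_mul _) (integrable_const _), integral_const_mul,
      integral_id_gaussianReal]
    simp only [integral_const, probReal_univ, one_smul]
    congr 1
    ring
  · filter_upwards [hae'] with x hx
    rw [hx, ENNReal.toReal_prod, Real.log_prod]
    · refine Finset.sum_congr rfl fun i _ => ?_
      rw [ENNReal.toReal_ofReal (Real.exp_pos _).le, Real.log_exp]
    · intro i _
      rw [ENNReal.toReal_ofReal (Real.exp_pos _).le]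
      exact (Real.exp_pos _).ne'

lemma aux_exp_lip {a b : ℝ} (hb : b ≤ 0) (h : a ≤ b) :
    |Real.exp a - Real.exp b| ≤ |a - b| := by
  rw [abs_of_nonpos (by linarith [Real.exp_le_exp.2 h]), abs_of_nonpos (by linarith)]
  have h1 : Real.exp a = Real.exp b * Real.exp (a - b) := by rw [← Real.exp_add]; congr 1; ring
  have h2 := Real.add_one_le_exp (a - b)
  have h3 : Real.exp b ≤ 1 := Real.exp_le_one_iff.2 hb
  have h4 := Real.exp_pos b
  rw [h1]
  nlinarith

lemma aux_exp_lip' {a b : ℝ} (ha : a ≤ 0) (hb : b ≤ 0) :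
    |Real.exp a - Real.exp b| ≤ |a - b| := by
  rcases le_total a b with h | h
  · exact aux_exp_lip hb h
  · rw [abs_sub_comm, abs_sub_comm a b]; exact aux_exp_lip ha h

lemma aux_heat_lip {T x y : ℝ} (hT : 0 < T) (hx : |x| ≤ 1) (hy : |y| ≤ 1) :
    |heatKernel T x - heatKernel T y| ≤
      (1 / Real.sqrt (4 * Real.pi * T) / (2 * T)) * |x - y| := by
  unfold heatKernel
  rw [← mul_sub, abs_mul, abs_of_nonneg (by positivity : 0 ≤ 1 / Real.sqrt (4 * Real.pi * T)),
    div_eq_mul_one_div _ (2 * T),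
    mul_assoc (1 / Real.sqrt (4 * Real.pi * T))]
  refine mul_le_mul_of_nonneg_left ?_ (by positivity)
  refine (aux_exp_lip' (div_nonpos_of_nonpos_of_nonneg (by nlinarith [sq_nonneg x]) (by positivity))
    (div_nonpos_of_nonpos_of_nonneg (by nlinarith [sq_nonneg y]) (by positivity))).trans ?_
  have : -x ^ 2 / (4 * T) - -y ^ 2 / (4 * T) = (1 / (2 * T)) * ((x - y) * (-(x + y) / 2)) := by
    field_simp; ring
  rw [this, abs_mul, abs_of_nonneg (by positivity : 0 ≤ 1 / (2 * T)), abs_mul]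
  refine mul_le_mul_of_nonneg_left ?_ (by positivity)
  have h2 : |(-(x + y) / 2)| ≤ 1 := by
    rw [abs_le] at hx hy ⊢
    constructor <;> linarith [hx.1, hx.2, hy.1, hy.2]
  nlinarith [abs_nonneg (x - y)]

lemma aux_grid {m n : ℕ} (i : Fin m) (j : Fin n) :
    |((j : ℝ) + 1) / n - ((i : ℝ) + 1) / m| ≤ 1 := by
  have key : ∀ (k : ℕ) (l : Fin k), 0 ≤ ((l : ℝ) + 1) / k ∧ ((l : ℝ) + 1) / k ≤ 1 := by
    intro k l
    have h : ((l : ℝ) + 1) ≤ k := by exact_mod_cast l.2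
    exact ⟨by positivity, div_le_one_of_le₀ h (by positivity)⟩
  have h1 := key n j
  have h2 := key m i
  rw [abs_le]
  constructor <;> linarith [h1.1, h1.2, h2.1, h2.2]

lemma aux_emd {n : ℕ} (d : Fin n → Fin n → ℝ) (p q : Fin n → ℝ) (hp : ∀ i, 0 ≤ p i)
    (hq : ∀ i, 0 ≤ q i) (hp1 : ∑ i, p i = 1) (hq1 : ∑ i, q i = 1) (a : Fin n → ℝ) (L : ℝ)
    (hL : 0 < L) (ha : ∀ i j, |a i - a j| ≤ L * d i j) :
    |∑ i, a i * p i - ∑ i, a i * q i| ≤ L * EMD d p q := by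
  rw [← div_le_iff₀' hL]
  refine le_csInf ?_ ?_
  · refine ⟨_, fun i j => p i * q j, fun i j => mul_nonneg (hp i) (hq j), fun i => ?_,
      fun j => ?_, ?_, rfl⟩
    · rw [← Finset.mul_sum, hq1, mul_one]
    · rw [← Finset.sum_mul, hp1, one_mul]
    · simp_rw [← Finset.mul_sum, hq1, mul_one, hp1]
  · rintro c ⟨F, hF, hFp, hFq, hF1, rfl⟩
    have ep : ∀ i, ∑ j, F i j = p i := by
      have := (Finset.sum_eq_sum_iff_of_le (s := Finset.univ) fun i _ => hFp i).1
        (hF1.trans hp1.symm)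
      exact fun i => this i (Finset.mem_univ i)
    have eq : ∀ j, ∑ i, F i j = q j := by
      have := (Finset.sum_eq_sum_iff_of_le (s := Finset.univ) fun j _ => hFq j).1
        ((Finset.sum_comm.trans hF1).trans hq1.symm)
      exact fun i => this i (Finset.mem_univ i)
    have h1 : ∑ i, a i * p i - ∑ i, a i * q i = ∑ i, ∑ j, F i j * (a i - a j) := by
      simp_rw [mul_sub, Finset.sum_sub_distrib]
      congr 1
      · refine Finset.sum_congr rfl fun i _ => ?_
        rw [← ep i, Finset.mul_sum]
        exact Finset.sum_congr rfl fun j _ => mul_comm _ _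
      · rw [Finset.sum_comm]
        refine Finset.sum_congr rfl fun i _ => ?_
        rw [← eq i, Finset.mul_sum]
        exact Finset.sum_congr rfl fun j _ => mul_comm _ _
    rw [div_le_iff₀' hL, h1, Finset.mul_sum]
    refine (Finset.abs_sum_le_sum_abs _ _).trans (Finset.sum_le_sum fun i _ => ?_)
    rw [Finset.mul_sum]
    refine (Finset.abs_sum_le_sum_abs _ _).trans (Finset.sum_le_sum fun j _ => ?_)
    rw [abs_mul, abs_of_nonneg (hF i j)]
    calc F i j * |a i - a j| ≤ F i j * (L * d i j) := mul_le_mul_of_nonneg_left (ha i j) (hF i j)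
      _ = _ := by ring

/-- There is a universal constant `C > 0` such that whenever `nT ≥ 1`,
for all unit-mass source vectors `f₀, f₀'`, the Kullback–Leibler divergence between the
Gaussian measurement distributions satisfies
`D(P_{f₀} ‖ P_{f₀'}) = ‖A f₀ − A f₀'‖₂²/(2σ²) ≤ C (m/(T³σ²)) EMD(f₀, f₀')²`. -/
theorem kl_divergence_heat_measurements :
    ∃ C : ℝ, 0 < C ∧ ∀ (T σ : ℝ) (m n : ℕ), 0 < T → 0 < σ → 1 ≤ m → 1 ≤ n →
      1 ≤ (n : ℝ) * T →
      ∀ f₀ f₀' : Fin n → ℝ,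
        (∀ i, f₀ i ∈ Set.Icc (0 : ℝ) 1) → (∀ i, f₀' i ∈ Set.Icc (0 : ℝ) 1) →
        l1norm f₀ = 1 → l1norm f₀' = 1 →
        KLdiv (measDist T σ m n f₀) (measDist T σ m n f₀') =
          (l2norm (fun i => (heatMatrix T m n).mulVec f₀ i -
            (heatMatrix T m n).mulVec f₀' i)) ^ 2 / (2 * σ ^ 2) ∧
        (l2norm (fun i => (heatMatrix T m n).mulVec f₀ i -
            (heatMatrix T m n).mulVec f₀' i)) ^ 2 / (2 * σ ^ 2) ≤
          C * ((m : ℝ) / (T ^ 3 * σ ^ 2)) * (EMD (gridDist n) f₀ f₀') ^ 2 := by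
  refine ⟨1, one_pos, ?_⟩
  intro T σ m n hT hσ hm hn _ f g hf hg hf1 hg1
  have hs : ∀ x : Fin m → ℝ, l2norm x ^ 2 = ∑ i, x i ^ 2 := fun x =>
    Real.sq_sqrt (Finset.sum_nonneg fun i _ => sq_nonneg _)
  have hsum : ∀ f : Fin n → ℝ, (∀ i, f i ∈ Set.Icc (0 : ℝ) 1) → l1norm f = 1 → ∑ i, f i = 1 := by
    intro f hf h
    rw [← h]
    exact Finset.sum_congr rfl fun i _ => (abs_of_nonneg (hf i).1).symm
  rw [hs]
  constructor
  · exact aux_kl _ _ (⟨σ ^ 2, sq_nonneg σ⟩ : NNReal)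
      (fun h => (pow_pos hσ 2).ne' (congrArg NNReal.toReal h))
  · set L : ℝ := 1 / Real.sqrt (4 * Real.pi * T) / (2 * T) with hL
    have hLpos : 0 < L := by positivity
    have hL2 : L ^ 2 ≤ 1 / T ^ 3 := by
      rw [hL, div_pow, div_pow, Real.sq_sqrt (by positivity), one_pow, div_div]
      apply one_div_le_one_div_of_le (by positivity)
      have : 0 < T ^ 3 := by positivity
      nlinarith [Real.pi_gt_three]
    have hb : ∀ i, ((heatMatrix T m n).mulVec f i - (heatMatrix T m n).mulVec g i) ^ 2 ≤
        (1 / T ^ 3) * EMD (gridDist n) f g ^ 2 := by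
      intro i
      have h := aux_emd (gridDist n) f g (fun i => (hf i).1) (fun i => (hg i).1) (hsum f hf hf1)
        (hsum g hg hg1) (fun j => heatMatrix T m n i j) L hLpos (fun j k => by
          refine (aux_heat_lip hT (aux_grid i j) (aux_grid i k)).trans (le_of_eq ?_)
          rw [← hL]
          congr 1
          rw [gridDist, sub_sub_sub_cancel_right, ← sub_div, add_sub_add_right_eq_sub, abs_div,
            abs_of_nonneg (by positivity : (0 : ℝ) ≤ n)])
      have h2 := pow_le_pow_left₀ (abs_nonneg _) h 2
      rw [sq_abs, mul_pow] at h2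
      refine le_trans h2 (mul_le_mul_of_nonneg_right hL2 (sq_nonneg _))
    have hb2 := Finset.sum_le_sum fun i (_ : i ∈ Finset.univ) => hb i
    rw [Finset.sum_const, Finset.card_univ, Fintype.card_fin, nsmul_eq_mul] at hb2
    rw [div_le_iff₀ (by positivity)]
    refine hb2.trans ?_
    have hE : 0 ≤ (m : ℝ) * (1 / T ^ 3 * EMD (gridDist n) f g ^ 2) := by positivity
    have : 1 * ((m : ℝ) / (T ^ 3 * σ ^ 2)) * EMD (gridDist n) f g ^ 2 * (2 * σ ^ 2) =
        2 * ((m : ℝ) * (1 / T ^ 3 * EMD (gridDist n) f g ^ 2)) := by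
      field_simp
    rw [this]
    linarith
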